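/- arXiv:2206.09525 — 3 statements merged into one kernel-verified Lean document; each statement's English description precedes it below -/
import Mathlib

section
/- Let n ≥ 2, let v₀,…,v_n be affinely independent points of ℝⁿ with barycentric coordinates λ₀,…,λ_n, let α ∈ 𝕋ⁿ_k, let 0 ≤ i ≠ j ≤ n with α_j ≥ 1, and set β = α + ε_i − ε_j ∈ 𝕋ⁿ_k. Choose ℓ ∈ {0,…,n} with ℓ ≠ i and ℓ ≠ j, and set γ = α + ε_ℓ − ε_j = β + ε_ℓ − ε_i ∈ 𝕋ⁿ_k. Then (1/(γ!·α_j))·div(λ^{α+ε_ℓ} t_{j,ℓ}) + (1/(γ!·β_i))·div(λ^{β+ε_ℓ} t_{ℓ,i}) = λ^α/α! − λ^β/β!, where t_{a,b} = v_b − v_a. -/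
open scoped BigOperators

/-!
The two coefficients are factorials in disguise: `γ! α_j = (α + ε_l)!` and `γ! β_i = (β + ε_l)!`.
Hence each summand is the derivative of a normalised monomial `λ ^ δ / δ!` along an edge.
Differentiating `t ^ δ / δ!` in `t_b` lowers `δ_b` by one and keeps the normalisation, and `λ_m`
varies along `v_b - v_a` only for `m = a` and `m = b`. The summands are therefore
`λ ^ α / α! - λ ^ γ / γ!` and `λ ^ γ / γ! - λ ^ β / β!`, and their sum telescopes.
-/

section DividedMonomial

variable {𝕜 ι : Type*} [Fintype ι]

/-- The monomial `t ^ α / α!`, the Bernstein basis function up to the factor `(∑ m, α m)!`. The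
factorials are distributed over the variables so that it is a product of functions of a single
variable. -/
def dividedMonomial [Field 𝕜] (t : ι → 𝕜) (α : ι → ℕ) : 𝕜 :=
  ∏ m, t m ^ α m / ((α m).factorial : 𝕜)

theorem dividedMonomial_eq_div [Field 𝕜] (t : ι → 𝕜) (α : ι → ℕ) :
    dividedMonomial t α = (∏ m, t m ^ α m) / ∏ m, ((α m).factorial : 𝕜) :=
  Finset.prod_div_distrib ..

theorem prod_factorial_add_single [DecidableEq ι] (α : ι → ℕ) (p : ι) :
    ∏ m, ((α + Pi.single p 1 : ι → ℕ) m).factorial = (α p + 1) * ∏ m, (α m).factorial := by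
  have off_p : ∀ m ∈ Finset.univ.erase p,
      ((α + Pi.single p 1 : ι → ℕ) m).factorial = (α m).factorial := fun m hm => by
    simp [Finset.ne_of_mem_erase hm]
  rw [← Finset.mul_prod_erase _ _ (Finset.mem_univ p), Finset.prod_congr rfl off_p,
    ← Finset.mul_prod_erase _ (fun m => (α m).factorial) (Finset.mem_univ p), ← mul_assoc]
  simp [Nat.factorial_succ]

theorem prod_factorial_mul_eq_prod_factorial_add_single [DecidableEq ι] {α γ : ι → ℕ} {j l : ι}
    (hlj : l ≠ j) (hγ : γ + Pi.single j 1 = α + Pi.single l 1) :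
    (∏ m, (γ m).factorial) * α j = ∏ m, ((α + Pi.single l 1 : ι → ℕ) m).factorial := by
  have hγj : γ j + 1 = α j := by simpa [hlj.symm] using congrFun hγ j
  rw [← hγ, prod_factorial_add_single, hγj, mul_comm]

theorem prod_erase_mul_eq_dividedMonomial_sub_single [Field 𝕜] [DecidableEq ι] (t : ι → 𝕜)
    (α : ι → ℕ) (p : ι) :
    (∏ m ∈ Finset.univ.erase p, t m ^ α m / ((α m).factorial : 𝕜)) *
        (t p ^ (α p - 1) / ((α p - 1).factorial : 𝕜)) =
      dividedMonomial t (α - Pi.single p 1) := by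
  rw [dividedMonomial, ← Finset.prod_erase_mul _ _ (Finset.mem_univ p)]
  congr 1
  · exact Finset.prod_congr rfl fun m hm => by simp [Finset.ne_of_mem_erase hm]
  · simp

variable [NontriviallyNormedField 𝕜] [CharZero 𝕜]

theorem hasDerivAt_pow_div_factorial (k : ℕ) (t : 𝕜) :
    HasDerivAt (fun s => s ^ k / (k.factorial : 𝕜))
      (if k = 0 then 0 else t ^ (k - 1) / ((k - 1).factorial : 𝕜)) t := by
  refine ((hasDerivAt_pow k t).div_const _).congr_deriv ?_
  cases k with
  | zero => simp
  | succ k =>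
    have hk : (k + 1 : 𝕜) ≠ 0 := by exact_mod_cast k.succ_ne_zero
    simp [Nat.factorial_succ, mul_div_mul_left _ _ hk]

theorem hasFDerivAt_dividedMonomial [DecidableEq ι] {E : Type*} [NormedAddCommGroup E]
    [NormedSpace 𝕜 E] {f : ι → E → 𝕜} {f' : ι → E →L[𝕜] 𝕜} {x : E}
    (hf : ∀ m, HasFDerivAt (f m) (f' m) x) (α : ι → ℕ) :
    HasFDerivAt (fun y => dividedMonomial (f · y) α)
      (∑ p, (if α p = 0 then 0 else dividedMonomial (f · x) (α - Pi.single p 1)) • f' p) x := by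
  refine (HasFDerivAt.finsetProd fun m _ =>
    (hasDerivAt_pow_div_factorial (α m) (f m x)).comp_hasFDerivAt x (hf m)).congr_fderiv
    (Finset.sum_congr rfl fun p _ => ?_)
  simp only [Function.comp_apply, smul_smul, mul_ite, mul_zero,
    ← prod_erase_mul_eq_dividedMonomial_sub_single]

end DividedMonomial

section BarycentricCoordinates

variable {𝕜 E ι : Type*} [NontriviallyNormedField 𝕜] [NormedAddCommGroup E] [NormedSpace 𝕜 E]

theorem hasFDerivAt_continuousAffineMap {F : Type*} [NormedAddCommGroup F] [NormedSpace 𝕜 F]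
    (f : E →ᴬ[𝕜] F) (x : E) :
    HasFDerivAt f f.contLinear x :=
  (f.contLinear.hasFDerivAt.add_const (f 0)).congr_of_eventuallyEq
    (.of_forall fun y => congrFun f.decomp y)

variable [CharZero 𝕜] [Fintype ι] [DecidableEq ι] {lam : ι → E →ᴬ[𝕜] 𝕜} {v : ι → E}

theorem fderiv_dividedMonomial_edge (hlam : ∀ i j, lam i (v j) = if i = j then 1 else 0)
    {α γ : ι → ℕ} {a b : ι} (hγ : γ + Pi.single a 1 = α + Pi.single b 1) (x : E) :
    fderiv 𝕜 (fun y => dividedMonomial (lam · y) (α + Pi.single b 1)) x (v b - v a) =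
      dividedMonomial (lam · x) α - dividedMonomial (lam · x) γ := by
  have edge : ∀ p, (lam p).contLinear (v b - v a) =
      (if p = b then 1 else 0) - if p = a then 1 else 0 := fun p => by
    rw [← hlam, ← hlam]
    exact (lam p).contLinear_map_vsub _ _
  have lower_b : α + Pi.single b 1 - Pi.single b 1 = α := add_tsub_cancel_right ..
  have lower_a : α + Pi.single b 1 - Pi.single a 1 = γ := by rw [← hγ, add_tsub_cancel_right]
  have pos_b : (α + Pi.single b 1 : ι → ℕ) b ≠ 0 := by simp
  have pos_a : (α + Pi.single b 1 : ι → ℕ) a ≠ 0 := by rw [← hγ]; simp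
  rw [(hasFDerivAt_dividedMonomial (fun m => hasFDerivAt_continuousAffineMap (lam m) x)
    (α + Pi.single b 1)).fderiv]
  simp only [sum_apply, smul_apply, smul_eq_mul, edge,
    mul_sub, mul_ite, mul_one, mul_zero, Finset.sum_sub_distrib, Finset.sum_ite_eq',
    Finset.mem_univ, if_true, if_neg pos_a, if_neg pos_b, lower_a, lower_b]

theorem one_div_mul_fderiv_monomial_edge
    (hlam : ∀ i j, lam i (v j) = if i = j then 1 else 0)
    {α γ : ι → ℕ} {j l : ι} (hlj : l ≠ j) (hγ : γ + Pi.single j 1 = α + Pi.single l 1) (x : E) :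
    1 / ((∏ m, ((γ m).factorial : 𝕜)) * (α j : 𝕜)) *
        fderiv 𝕜 (fun y => ∏ m, lam m y ^ (α + Pi.single l 1 : ι → ℕ) m) x (v l - v j) =
      dividedMonomial (lam · x) α - dividedMonomial (lam · x) γ := by
  have coefficient : (∏ m, ((γ m).factorial : 𝕜)) * (α j : 𝕜) =
      ∏ m, (((α + Pi.single l 1 : ι → ℕ) m).factorial : 𝕜) := by
    exact_mod_cast prod_factorial_mul_eq_prod_factorial_add_single hlj hγ
  have normalise : (fun y => dividedMonomial (lam · y) (α + Pi.single l 1)) =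
      (∏ m, (((α + Pi.single l 1 : ι → ℕ) m).factorial : 𝕜))⁻¹ •
        fun y => ∏ m, lam m y ^ (α + Pi.single l 1 : ι → ℕ) m := by
    ext y
    rw [dividedMonomial_eq_div, div_eq_inv_mul]
    rfl
  rw [← fderiv_dividedMonomial_edge hlam hγ x, normalise, fderiv_const_smul_field, coefficient,
    one_div]
  rfl

-- `hβ` and `hγ` encode `β = α + ε_i - ε_j` and `γ = α + ε_l - ε_j` without truncated subtraction.
theorem div_bernstein_detour_field_general
    (hlam : ∀ i j, lam i (v j) = if i = j then 1 else 0) {α β γ : ι → ℕ} {i j l : ι}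
    (hli : l ≠ i) (hlj : l ≠ j) (hβ : β + Pi.single j 1 = α + Pi.single i 1)
    (hγ : γ + Pi.single j 1 = α + Pi.single l 1) (x : E) :
    1 / ((∏ m, ((γ m).factorial : 𝕜)) * (α j : 𝕜)) *
        fderiv 𝕜 (fun y => ∏ m, lam m y ^ (α + Pi.single l 1 : ι → ℕ) m) x (v l - v j) +
      1 / ((∏ m, ((γ m).factorial : 𝕜)) * (β i : 𝕜)) *
        fderiv 𝕜 (fun y => ∏ m, lam m y ^ (β + Pi.single l 1 : ι → ℕ) m) x (v i - v l) =
      (∏ m, lam m x ^ α m) / (∏ m, ((α m).factorial : 𝕜)) -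
        (∏ m, lam m x ^ β m) / ∏ m, ((β m).factorial : 𝕜) := by
  have hγβ : γ + Pi.single i 1 = β + Pi.single l 1 := by
    apply add_right_cancel (b := Pi.single j 1)
    rw [add_right_comm, hγ, add_right_comm β, hβ, add_right_comm]
  rw [← neg_sub (v l) (v i), map_neg, mul_neg,
    one_div_mul_fderiv_monomial_edge hlam hlj hγ, one_div_mul_fderiv_monomial_edge hlam hli hγβ,
    ← dividedMonomial_eq_div (lam · x) α, ← dividedMonomial_eq_div (lam · x) β]
  ring

end BarycentricCoordinates

theorem sum_fderiv_mul_const_single {𝕜 ι : Type*} [NontriviallyNormedField 𝕜] [Fintype ι]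
    [DecidableEq ι] (f : (ι → 𝕜) → 𝕜) (c x : ι → 𝕜) :
    ∑ s, fderiv 𝕜 (fun y => f y * c s) x (Pi.single s 1) = fderiv 𝕜 f x c := by
  conv_rhs => rw [pi_eq_sum_univ' c, map_sum]
  refine Finset.sum_congr rfl fun s _ => ?_
  have hcomm : (fun y => f y * c s) = c s • f := funext fun y => mul_comm ..
  rw [hcomm, fderiv_const_smul_field, map_smul]
  rfl

theorem add_single_eq_of_eq_tsub {ι : Type*} [DecidableEq ι] {α β : ι → ℕ} {i j : ι}
    (hαj : 1 ≤ α j)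
    (hβ : β = fun m => (α m + if m = i then 1 else 0) - if m = j then 1 else 0) :
    β + Pi.single j 1 = α + Pi.single i 1 := by
  ext m
  rcases eq_or_ne m j with rfl | hmj
  · simp [hβ, Pi.single_apply, Nat.sub_add_cancel (Nat.le_add_right_of_le hαj)]
  · simp [hβ, Pi.single_apply, hmj]

/-- detour identity.  With `β = α + ε_i − ε_j` (`α_j ≥ 1`), `l ∉ {i,j}` and
`γ = α + ε_l − ε_j = β + ε_l − ε_i`, one has
`(1/(γ!·α_j)) div(λ^{α+ε_l} t_{j,l}) + (1/(γ!·β_i)) div(λ^{β+ε_l} t_{l,i})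
  = λ^α/α! − λ^β/β!`, where `t_{a,b} = v_b − v_a`. -/
theorem div_bernstein_detour_field
    (n k : ℕ) (hn : 2 ≤ n)
    (v : Fin (n + 1) → (Fin n → ℝ)) (hv : AffineIndependent ℝ v)
    (lam : Fin (n + 1) → ((Fin n → ℝ) →ᵃ[ℝ] ℝ))
    (hlam : ∀ i j, lam i (v j) = if i = j then 1 else 0)
    (hsum : ∀ x : Fin n → ℝ, ∑ i, lam i x = 1)
    (α : Fin (n + 1) → ℕ) (hαk : ∑ i, α i = k)
    (i j l : Fin (n + 1)) (hij : i ≠ j) (hli : l ≠ i) (hlj : l ≠ j)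
    (hαj : 1 ≤ α j)
    (β : Fin (n + 1) → ℕ)
    (hβ : β = fun m => (α m + if m = i then 1 else 0) - if m = j then 1 else 0)
    (γ : Fin (n + 1) → ℕ)
    (hγ : γ = fun m => (α m + if m = l then 1 else 0) - if m = j then 1 else 0)
    (x : Fin n → ℝ) :
    (1 / ((∏ m, (Nat.factorial (γ m) : ℝ)) * (α j : ℝ))) *
      (∑ s : Fin n, fderiv ℝ
        (fun y => (∏ m, (lam m y) ^ (α m + if m = l then 1 else 0)) * (v l - v j) s)
        x (Pi.single s 1))
    + (1 / ((∏ m, (Nat.factorial (γ m) : ℝ)) * (β i : ℝ))) *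
      (∑ s : Fin n, fderiv ℝ
        (fun y => (∏ m, (lam m y) ^ (β m + if m = l then 1 else 0)) * (v i - v l) s)
        x (Pi.single s 1))
    = (∏ m, (lam m x) ^ (α m)) / (∏ m, (Nat.factorial (α m) : ℝ))
      - (∏ m, (lam m x) ^ (β m)) / (∏ m, (Nat.factorial (β m) : ℝ)) := by
  simpa only [sum_fderiv_mul_const_single, Pi.add_apply, Pi.single_apply,
    ContinuousAffineMap.coe_mk] using
    div_bernstein_detour_field_general
      (lam := fun m => ⟨lam m, (lam m).continuous_of_finiteDimensional⟩)
      hlam hli hlj (add_single_eq_of_eq_tsub hαj hβ) (add_single_eq_of_eq_tsub hαj hγ) x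
end

section
/- Let n ≥ 2 and m ≥ 0 be integers, and let r₀, r₁, …, r_n be nonnegative integers with r_n = 0, r_{n−1} = m and r_ℓ ≥ 2·r_{ℓ+1} for ℓ = n−2, …, 0. Let k ≥ 2r₀ + 1. Then for every ℓ with 1 ≤ ℓ ≤ n−1 and every subset f of {0,…,n} with |f| = ℓ+1, one has the equality of subsets of 𝕋ⁿ_k: D(f, r_ℓ) \ ⋃_{i=0}^{ℓ−1} ⋃_{e ⊆ f, |e| = i+1} D(e, r_i) = D(f, r_ℓ) \ ⋃_{i=0}^{ℓ−1} ⋃_{e ⊆ {0,…,n}, |e| = i+1} D(e, r_i). -/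
open scoped BigOperators

/-- The lattice tube `D(f, s)` inside the simplicial lattice `𝕋ⁿ_k`: lattice nodes whose
distance `∑_{i ∉ f} α_i` to the sub-simplex `f` is at most `s`. -/
def latticeTube (n k : ℕ) (f : Finset (Fin (n + 1))) (s : ℕ) : Set (Fin (n + 1) → ℕ) :=
  {α | ∑ i, α i = k ∧ ∑ i ∈ fᶜ, α i ≤ s}

/-!
The distance to `e ∩ f` is at most the sum of the distances to `e` and to `f`, so a node of
`D(f, s)` that lies in `D(e, r i)` with `e ⊄ f` lies in `D(e ∩ f, r i + s)`. Since `e ∩ f` has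
smaller dimension `j < i` than `e`, a drop of the radii by at least `s` per dimension absorbs this
tube into `D(e ∩ f, r j)`; and `e ∩ f = ∅` is impossible, every node being at distance `k` from
`∅`. The dyadic condition `2 * r (i + 1) ≤ r i` yields such a drop with `s = r l`.
-/

section LatticeTube

variable {n k s t : ℕ} {e f : Finset (Fin (n + 1))} {α : Fin (n + 1) → ℕ}

theorem latticeTube_mono (hst : s ≤ t) : latticeTube n k f s ⊆ latticeTube n k f t :=
  fun _ ⟨hsum, hdist⟩ => ⟨hsum, hdist.trans hst⟩

theorem latticeTube_inter_latticeTube_subset :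
    latticeTube n k e s ∩ latticeTube n k f t ⊆ latticeTube n k (e ∩ f) (s + t) := by
  rintro α ⟨⟨hsum, he⟩, -, hf⟩
  refine ⟨hsum, ?_⟩
  calc ∑ i ∈ (e ∩ f)ᶜ, α i
      = ∑ i ∈ eᶜ ∪ fᶜ, α i := by rw [Finset.compl_inter]
    _ ≤ ∑ i ∈ eᶜ ∪ fᶜ, α i + ∑ i ∈ eᶜ ∩ fᶜ, α i := Nat.le_add_right _ _
    _ = ∑ i ∈ eᶜ, α i + ∑ i ∈ fᶜ, α i := Finset.sum_union_inter
    _ ≤ s + t := add_le_add he hf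

theorem nonempty_of_mem_latticeTube (hs : s < k) (hα : α ∈ latticeTube n k f s) :
    f.Nonempty := by
  rw [Finset.nonempty_iff_ne_empty]
  rintro rfl
  obtain ⟨hsum, hdist⟩ := hα
  rw [Finset.compl_empty, hsum] at hdist
  exact hdist.not_gt hs

theorem exists_subset_mem_latticeTube {r : ℕ → ℕ} {i : ℕ} (hk : r i + s < k)
    (hr : ∀ j < i, r i + s ≤ r j) (he : e.card = i + 1)
    (hαe : α ∈ latticeTube n k e (r i)) (hαf : α ∈ latticeTube n k f s) :
    ∃ j ≤ i, ∃ e' ⊆ f, e'.card = j + 1 ∧ α ∈ latticeTube n k e' (r j) := by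
  by_cases hef : e ⊆ f
  · exact ⟨i, le_rfl, e, hef, he, hαe⟩
  have hinter : α ∈ latticeTube n k (e ∩ f) (r i + s) :=
    latticeTube_inter_latticeTube_subset ⟨hαe, hαf⟩
  obtain ⟨j, hj⟩ : ∃ j, (e ∩ f).card = j + 1 :=
    Nat.exists_eq_add_one.mpr (nonempty_of_mem_latticeTube hk hinter).card_pos
  have hcard : (e ∩ f).card < e.card :=
    Finset.card_lt_card (inf_lt_left.mpr hef)
  have hji : j < i := by omega
  exact ⟨j, hji.le, e ∩ f, Finset.inter_subset_right, hj, latticeTube_mono (hr j hji) hinter⟩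

end LatticeTube

section Sequence

variable {M : Type*} [AddCommMonoid M] [Preorder M] [CanonicallyOrderedAdd M]
  {r : ℕ → M} {s : M} {l : ℕ}

theorem add_le_of_forall_add_one_add_le (hr : ∀ i, i + 1 < l → r (i + 1) + s ≤ r i)
    {j i : ℕ} (hji : j < i) (hil : i < l) : r i + s ≤ r j := by
  have hanti : AntitoneOn r (Set.Iio l) :=
    antitoneOn_of_add_one_le Set.ordConnected_Iio
      fun a _ _ ha => le_self_add.trans (hr a ha)
  have hjl : j + 1 < l := lt_of_le_of_lt hji hil
  calc r i + s ≤ r (j + 1) + s := by gcongr; exact hanti hjl hil hji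
    _ ≤ r j := hr j hjl

theorem add_le_of_forall_add_self_le (hr : ∀ i < l, r (i + 1) + r (i + 1) ≤ r i)
    {i : ℕ} (hi : i < l) : r (i + 1) + r l ≤ r i := by
  have hanti : AntitoneOn r (Set.Iic l) :=
    antitoneOn_of_add_one_le Set.ordConnected_Iic
      fun a _ _ ha => le_self_add.trans (hr a ha)
  calc r (i + 1) + r l ≤ r (i + 1) + r (i + 1) := by
        gcongr; exact hanti hi Set.self_mem_Iic hi
    _ ≤ r i := hr i hi

end Sequence

theorem lattice_tube_removal_local_eq_global_general {n k l s : ℕ} {r : ℕ → ℕ}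
    (hr : ∀ i, i + 1 < l → r (i + 1) + s ≤ r i) (hk : r 0 + s < k)
    (f : Finset (Fin (n + 1))) :
    latticeTube n k f s \
        ⋃ i < l, ⋃ e ∈ {e : Finset (Fin (n + 1)) | e ⊆ f ∧ e.card = i + 1},
          latticeTube n k e (r i)
      = latticeTube n k f s \
        ⋃ i < l, ⋃ e ∈ {e : Finset (Fin (n + 1)) | e.card = i + 1},
          latticeTube n k e (r i) := by
  refine Set.Subset.antisymm ?_ ?_
  · rintro α ⟨hαf, hlocal⟩
    refine ⟨hαf, fun hglobal => hlocal ?_⟩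
    simp only [Set.mem_iUnion, Set.mem_ofPred_eq, exists_prop] at hglobal ⊢
    obtain ⟨i, hil, e, he, hαe⟩ := hglobal
    have hgap : ∀ j < i, r i + s ≤ r j :=
      fun j hji => add_le_of_forall_add_one_add_le hr hji hil
    have hki : r i + s < k := by
      rcases i.eq_zero_or_pos with rfl | hi
      · exact hk
      · have := hgap 0 hi
        omega
    obtain ⟨j, hji, e', he'f, he', hαe'⟩ := exists_subset_mem_latticeTube hki hgap he hαe hαf
    exact ⟨j, hji.trans_lt hil, e', ⟨he'f, he'⟩, hαe'⟩
  · exact Set.sdiff_subset_sdiff_right <|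
      Set.iUnion₂_mono fun i _ => Set.biUnion_subset_biUnion_left fun e he => he.2

/-- under the smoothness conditions `r_n = 0`, `r_{n−1} = m`,
`r_ℓ ≥ 2 r_{ℓ+1}` and `k ≥ 2r₀ + 1`, removing the tubes `D(e, r_i)` of the sub-simplices
`e` of `f` from `D(f, r_ℓ)` is the same as removing the tubes of all `i`-dimensional
sub-simplices of the full simplex, `i = 0, …, ℓ−1`. -/
theorem lattice_tube_removal_local_eq_global
    (n : ℕ) (hn : 2 ≤ n) (m : ℕ) (r : ℕ → ℕ)
    (hrn : r n = 0) (hrn1 : r (n - 1) = m)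
    (hrdec : ∀ l, l ≤ n - 2 → 2 * r (l + 1) ≤ r l)
    (k : ℕ) (hk : 2 * r 0 + 1 ≤ k)
    (l : ℕ) (hl1 : 1 ≤ l) (hl2 : l ≤ n - 1)
    (f : Finset (Fin (n + 1))) (hf : f.card = l + 1) :
    latticeTube n k f (r l) \
        ⋃ i < l, ⋃ e ∈ {e : Finset (Fin (n + 1)) | e ⊆ f ∧ e.card = i + 1},
          latticeTube n k e (r i)
      = latticeTube n k f (r l) \
        ⋃ i < l, ⋃ e ∈ {e : Finset (Fin (n + 1)) | e.card = i + 1},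
          latticeTube n k e (r i) := by
  have hdrop : ∀ i < l, r (i + 1) + r l ≤ r i := fun i hi =>
    add_le_of_forall_add_self_le (fun j hj => two_mul (r (j + 1)) ▸ hrdec j (by omega)) hi
  have hk' : r 0 + r l < k := by
    have := hdrop 0 hl1
    omega
  exact lattice_tube_removal_local_eq_global_general (fun i hi => hdrop i (by omega)) hk' f
end

section
/- Let n ≥ 2 and m ≥ 0 be integers, let r₀, …, r_n be nonnegative integers with r_n = 0, r_{n−1} = m and r_ℓ ≥ 2·r_{ℓ+1} for ℓ = n−2, …, 0, and let k ≥ 2r₀ + 1. Let v₀,…,v_n be affinely independent points of ℝⁿ with barycentric coordinates λ₀,…,λ_n, and let S_ℓ(f) (for ℓ = 0,…,n−1 and f ⊆ {0,…,n} with |f| = ℓ+1) and S_n be the sets of the lattice decomposition. Then the space P_k of real polynomial functions on ℝⁿ of total degree at most k is the internal direct sum, over ℓ = 0,…,n and all such f (with f = {0,…,n} for ℓ = n), of the subspaces span{λ^α : α ∈ S_ℓ(f)}; in particular the Bernstein monomials {λ^α : α ∈ 𝕋ⁿ_k} form a basis of P_k. -/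
open scoped BigOperators

/-- The decomposition sets `S_ℓ(f) = D(f, r_ℓ) \ ⋃_{i<ℓ} ⋃_{e ⊆ f, |e| = i+1} D(e, r_i)`. -/
def latticeS (n k : ℕ) (r : ℕ → ℕ) (l : ℕ) (f : Finset (Fin (n + 1))) :
    Set (Fin (n + 1) → ℕ) :=
  latticeTube n k f (r l) \
    ⋃ i < l, ⋃ e ∈ {e : Finset (Fin (n + 1)) | e ⊆ f ∧ e.card = i + 1},
      latticeTube n k e (r i)

/-- The interior set `S_n = 𝕋ⁿ_k \ ⋃_{i<n} ⋃_{|f| = i+1} D(f, r_i)`. -/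
def latticeSTop (n k : ℕ) (r : ℕ → ℕ) : Set (Fin (n + 1) → ℕ) :=
  {α | ∑ i, α i = k} \
    ⋃ i < n, ⋃ f ∈ {f : Finset (Fin (n + 1)) | f.card = i + 1}, latticeTube n k f (r i)

/-- The Bernstein monomial `λ^α = ∏ λ_i^{α_i}` as a function on `ℝⁿ`. -/
def bernsteinBary {n : ℕ} (lam : Fin (n + 1) → ((Fin n → ℝ) →ᵃ[ℝ] ℝ))
    (α : Fin (n + 1) → ℕ) : (Fin n → ℝ) → ℝ :=
  fun x => ∏ i, (lam i x) ^ (α i)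

/-
Let `Λ` be the space of affine functions. By homogenization, the polynomial functions of degree at
most `k` form the power `Λ ^ k` of `Λ` in the algebra of functions. Since `Λ` is spanned by the
barycentric coordinates, `Λ ^ k` is spanned by their monomials of degree `k`. These are linearly
independent: a form vanishing on the hyperplane `∑ i, w i = 1` vanishes by scaling wherever
`∑ i, w i ≠ 0`, hence is zero. It remains to partition the lattice `𝕋ⁿ_k`. A lattice point
close to both `f` and `g` is close to `f ∩ g`, because the radii double as the dimension decreases,
and `k > 2 r₀` keeps it from being close to disjoint faces.
-/

section PolynomialFunctions

open MvPolynomial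

variable {σ R A : Type*} [CommSemiring R] [CommSemiring A] [Algebra R A]

lemma restrictTotalDegree_eq_pow (k : ℕ) :
    restrictTotalDegree σ R k = (1 ⊔ homogeneousSubmodule σ R 1) ^ k := by
  apply le_antisymm
  · intro p hp
    rw [mem_restrictTotalDegree] at hp
    rw [← sum_homogeneousComponent p]
    refine Submodule.sum_mem _ fun j hj => ?_
    have hjk : j ≤ k := by rw [Finset.mem_range] at hj; omega
    have hmem : homogeneousComponent j p ∈ homogeneousSubmodule σ R 1 ^ j := by
      rw [homogeneousSubmodule_one_pow]
      exact homogeneousComponent_mem j p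
    have hle : homogeneousSubmodule σ R 1 ^ j ≤ (1 ⊔ homogeneousSubmodule σ R 1) ^ k :=
      (pow_le_pow_left' le_sup_right j).trans (pow_le_pow_right₀ le_sup_left hjk)
    exact hle hmem
  · induction k with
    | zero =>
      rw [pow_zero, Submodule.one_le, mem_restrictTotalDegree, totalDegree_one]
    | succ k ih =>
      have hone : 1 ⊔ homogeneousSubmodule σ R 1 ≤ restrictTotalDegree σ R 1 := by
        refine sup_le (Submodule.one_le.mpr ?_) fun p hp => ?_
        · simp [mem_restrictTotalDegree]
        · exact (mem_restrictTotalDegree _ _ _).mpr hp.totalDegree_le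
      rw [pow_succ]
      refine (mul_le_mul' ih hone).trans (Submodule.mul_le.mpr fun p hp q hq => ?_)
      rw [mem_restrictTotalDegree] at hp hq ⊢
      exact (totalDegree_mul p q).trans (Nat.add_le_add hp hq)

lemma map_aeval_homogeneousSubmodule (f : σ → A) (k : ℕ) :
    (homogeneousSubmodule σ R k).map (aeval f).toLinearMap =
      Submodule.span R (Set.range f) ^ k := by
  rw [← homogeneousSubmodule_one_pow, Submodule.map_pow, homogeneousSubmodule_one_eq_span_X,
    Submodule.map_span, ← Set.range_comp]
  simp [Function.comp_def]

lemma map_aeval_restrictTotalDegree (f : σ → A) (k : ℕ) :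
    (restrictTotalDegree σ R k).map (aeval f).toLinearMap =
      (1 ⊔ Submodule.span R (Set.range f)) ^ k := by
  rw [restrictTotalDegree_eq_pow, Submodule.map_pow, Submodule.map_sup, Submodule.map_one,
    map_aeval_homogeneousSubmodule, pow_one]

lemma aeval_monomial_equivFunOnFinite_symm [Fintype σ] (f : σ → A) (α : σ → ℕ) :
    aeval f (monomial (Finsupp.equivFunOnFinite.symm α) (1 : R)) = ∏ i, f i ^ α i := by
  simp [aeval_monomial, Finsupp.prod_fintype]

lemma span_prod_pow_eq_span_range_pow [Fintype σ] (f : σ → A) (k : ℕ) :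
    Submodule.span R ((fun α : σ → ℕ => ∏ i, f i ^ α i) '' {α | ∑ i, α i = k}) =
      Submodule.span R (Set.range f) ^ k := by
  have hdegree : {d : σ →₀ ℕ | d.degree = k} =
      Finsupp.equivFunOnFinite.symm '' {α | ∑ i, α i = k} := by
    ext d
    simp [Equiv.image_eq_preimage_symm, Finsupp.degree_eq_sum]
  rw [← map_aeval_homogeneousSubmodule, homogeneousSubmodule_eq_finsupp_supported, hdegree,
    AddMonoidAlgebra.supported_eq_span_single, Submodule.map_span, Set.image_image, Set.image_image]
  simp only [single_eq_monomial, AlgHom.toLinearMap_apply, aeval_monomial_equivFunOnFinite_symm]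

lemma aeval_pi_apply {X : Type*} (f : σ → X → R) (p : MvPolynomial σ R) (x : X) :
    aeval f p x = eval (fun i => f i x) p := by
  have h := DFunLike.congr_fun (comp_aeval f (Pi.evalAlgHom R (fun _ : X => R) x)) p
  rwa [aeval_eq_eval] at h

variable (σ R) in
/-- The space `P_k` of polynomial functions of total degree at most `k`, inside the algebra of all
functions `(σ → R) → R`. -/
noncomputable def polynomialFunctionsLE (k : ℕ) : Submodule R ((σ → R) → R) :=
  (restrictTotalDegree σ R k).map (aeval fun j x => x j).toLinearMap

lemma mem_polynomialFunctionsLE {k : ℕ} {p : (σ → R) → R} :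
    p ∈ polynomialFunctionsLE σ R k ↔
      ∃ q : MvPolynomial σ R, q.totalDegree ≤ k ∧ p = fun x => eval x q := by
  have haeval (q : MvPolynomial σ R) :
      aeval (fun j (x : σ → R) => x j) q = fun x => eval x q :=
    funext (aeval_pi_apply _ q)
  simp [polynomialFunctionsLE, mem_restrictTotalDegree, haeval, eq_comm]

lemma eval_smul_of_isHomogeneous {F : MvPolynomial σ R} {k : ℕ} (hF : F.IsHomogeneous k)
    (c : R) (w : σ → R) : eval (c • w) F = c ^ k * eval w F := by
  simp only [eval_eq, Finset.mul_sum]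
  refine Finset.sum_congr rfl fun d hd => ?_
  rw [hF.degree_eq_sum_deg_support hd]
  simp only [Pi.smul_apply, smul_eq_mul, mul_pow, Finset.prod_mul_distrib,
    Finset.prod_pow_eq_pow_sum]
  ring

lemma eq_zero_of_isHomogeneous_of_eval_eq_zero {K : Type*} [Field K] [Infinite K] [Fintype σ]
    [Nonempty σ] {F : MvPolynomial σ K} {k : ℕ} (hF : F.IsHomogeneous k)
    (hzero : ∀ w : σ → K, ∑ i, w i = 1 → eval w F = 0) : F = 0 := by
  classical
  have hX : (∑ i, X i : MvPolynomial σ K) ≠ 0 := fun h => by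
    simpa using congrArg (eval (Pi.single (Classical.arbitrary σ) 1)) h
  refine (mul_eq_zero.mp ?_).resolve_left hX
  refine MvPolynomial.funext fun c => ?_
  rw [map_mul, map_zero, map_sum]
  simp only [eval_X]
  refine mul_eq_zero.mpr (or_iff_not_imp_left.mpr fun hc => ?_)
  have hnormalized : ∑ i, ((∑ j, c j)⁻¹ • c) i = 1 := by
    simp [← Finset.mul_sum, hc]
  rw [← smul_inv_smul₀ hc c, eval_smul_of_isHomogeneous hF, hzero _ hnormalized, mul_zero]

end PolynomialFunctions

section BarycentricCoordinates

variable {ι σ K V P : Type*}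

lemma affineMap_apply_eq_sum_coord [Fintype ι] [Ring K] [AddCommGroup V] [Module K V]
    [AddTorsor V P] {M : Type*} [AddCommGroup M] [Module K M] (b : AffineBasis ι K P)
    (a : P →ᵃ[K] M) (x : P) : a x = ∑ i, b.coord i x • a (b i) := by
  have hcoord := b.sum_coord_apply_eq_one x
  conv_lhs => rw [← b.affineCombination_coord_eq_self x, Finset.map_affineCombination _ _ _ hcoord,
    Finset.affineCombination_eq_linear_combination _ _ _ hcoord]
  rfl

lemma eq_coord_of_apply_eq_ite [Ring K] [AddCommGroup V] [Module K V] [AddTorsor V P]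
    [Finite ι] [DecidableEq ι] (b : AffineBasis ι K P) {lam : ι → (P →ᵃ[K] K)}
    (hlam : ∀ i j, lam i (b j) = if i = j then 1 else 0) : lam = b.coord := by
  cases nonempty_fintype ι
  ext i x
  simp [affineMap_apply_eq_sum_coord b (lam i) x, hlam]

lemma affineMap_mem_span_range_coord [CommRing K] [AddCommGroup V] [Module K V] [AddTorsor V P]
    [Finite ι] (b : AffineBasis ι K P) (a : P →ᵃ[K] K) :
    ⇑a ∈ Submodule.span K (Set.range fun i => ⇑(b.coord i)) := by
  cases nonempty_fintype ι
  have ha : ⇑a = ∑ i, a (b i) • ⇑(b.coord i) := by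
    ext x
    simp [affineMap_apply_eq_sum_coord b a x, mul_comm]
  rw [ha]
  exact Submodule.sum_mem _ fun i _ =>
    Submodule.smul_mem _ _ (Submodule.subset_span (Set.mem_range_self i))

lemma affineMap_mem_one_sup_span_proj [CommRing K] [Finite σ] (a : (σ → K) →ᵃ[K] K) :
    ⇑a ∈ (1 ⊔ Submodule.span K (Set.range fun j x => x j) : Submodule K ((σ → K) → K)) := by
  classical
  cases nonempty_fintype σ
  have ha : ⇑a = algebraMap K ((σ → K) → K) (a 0) +
      ∑ j, a.linear (Pi.single j 1) • fun x : σ → K => x j := by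
    ext x
    have hlinear : a.linear x = ∑ j, x j * a.linear (Pi.single j 1) := by
      conv_lhs => rw [pi_eq_sum_univ' x]
      simp
    rw [a.decomp]
    simp [hlinear, mul_comm, add_comm]
  rw [ha]
  refine Submodule.add_mem_sup (Submodule.mem_one.mpr ⟨_, rfl⟩) (Submodule.sum_mem _ fun j _ => ?_)
  exact Submodule.smul_mem _ _ (Submodule.subset_span (Set.mem_range_self j))

lemma span_range_coord [CommRing K] [Finite ι] [Finite σ] (b : AffineBasis ι K (σ → K)) :
    Submodule.span K (Set.range fun i => ⇑(b.coord i)) =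
      1 ⊔ Submodule.span K (Set.range fun j x => x j) := by
  apply le_antisymm
  · rw [Submodule.span_le]
    rintro _ ⟨i, rfl⟩
    exact affineMap_mem_one_sup_span_proj (b.coord i)
  · refine sup_le (Submodule.one_le.mpr
      (affineMap_mem_span_range_coord b (AffineMap.const K _ 1))) ?_
    rw [Submodule.span_le]
    rintro _ ⟨j, rfl⟩
    exact affineMap_mem_span_range_coord b (LinearMap.proj j).toAffineMap

lemma span_prod_coord_pow [CommRing K] [Fintype ι] [Finite σ] (b : AffineBasis ι K (σ → K))
    (k : ℕ) :
    Submodule.span K ((fun α : ι → ℕ => ∏ i, ⇑(b.coord i) ^ α i) '' {α | ∑ i, α i = k}) =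
      polynomialFunctionsLE σ K k := by
  rw [span_prod_pow_eq_span_range_pow, span_range_coord, polynomialFunctionsLE,
    map_aeval_restrictTotalDegree]

lemma disjoint_homogeneousSubmodule_ker_aeval_coord [Finite ι] [Field K] [Infinite K]
    [AddCommGroup V] [Module K V] [AddTorsor V P] (b : AffineBasis ι K P) (k : ℕ) :
    Disjoint (MvPolynomial.homogeneousSubmodule ι K k)
      (LinearMap.ker (MvPolynomial.aeval fun i => ⇑(b.coord i)).toLinearMap) := by
  cases nonempty_fintype ι
  have := b.nonempty
  refine Submodule.disjoint_def.mpr fun F hF hker => ?_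
  refine eq_zero_of_isHomogeneous_of_eval_eq_zero hF fun w hw => ?_
  have hx := congrFun (LinearMap.mem_ker.mp hker) (Finset.univ.affineCombination K b w)
  have hcoord (i : ι) : b.coord i (Finset.univ.affineCombination K b w) = w i :=
    b.coord_apply_combination_of_mem (Finset.mem_univ i) hw
  rw [AlgHom.toLinearMap_apply, aeval_pi_apply] at hx
  simpa [hcoord] using hx

lemma linearIndependent_prod_coord_pow [Fintype ι] [Field K] [Infinite K] [AddCommGroup V]
    [Module K V] [AddTorsor V P] (b : AffineBasis ι K P) (k : ℕ) :
    LinearIndependent K fun a : {α : ι → ℕ // ∑ i, α i = k} => ∏ i, ⇑(b.coord i) ^ a.1 i := by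
  have hmonomial : LinearIndependent K fun a : {α : ι → ℕ // ∑ i, α i = k} =>
      MvPolynomial.monomial (Finsupp.equivFunOnFinite.symm a.1) (1 : K) :=
    (MvPolynomial.basisMonomials ι K).linearIndependent.comp _
      (Finsupp.equivFunOnFinite.symm.injective.comp Subtype.val_injective)
  have hspan : Submodule.span K (Set.range fun a : {α : ι → ℕ // ∑ i, α i = k} =>
      MvPolynomial.monomial (Finsupp.equivFunOnFinite.symm a.1) (1 : K)) ≤
      MvPolynomial.homogeneousSubmodule ι K k := by
    rw [Submodule.span_le]
    rintro _ ⟨a, rfl⟩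
    exact MvPolynomial.isHomogeneous_monomial _ ((Finsupp.degree_eq_sum _).trans a.2)
  simpa only [Function.comp_def, AlgHom.toLinearMap_apply, aeval_monomial_equivFunOnFinite_symm]
    using hmonomial.map ((disjoint_homogeneousSubmodule_ker_aeval_coord b k).mono_left hspan)

lemma exists_affineBasis_coord_eq [Fintype ι] [DecidableEq ι] [Field K] [AddCommGroup V]
    [Module K V] [FiniteDimensional K V] [AddTorsor V P]
    (hcard : Fintype.card ι = Module.finrank K V + 1) {v : ι → P}
    (hv : AffineIndependent K v) {lam : ι → (P →ᵃ[K] K)}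
    (hlam : ∀ i j, lam i (v j) = if i = j then 1 else 0) :
    ∃ b : AffineBasis ι K P, lam = b.coord :=
  ⟨⟨v, hv, hv.affineSpan_eq_top_iff_card_eq_finrank_add_one.mpr hcard⟩,
    eq_coord_of_apply_eq_ite _ hlam⟩

lemma bernsteinBary_eq_prod {n : ℕ} (lam : Fin (n + 1) → ((Fin n → ℝ) →ᵃ[ℝ] ℝ)) :
    bernsteinBary lam = fun α => ∏ i, ⇑(lam i) ^ α i := by
  ext α x
  simp [bernsteinBary]

end BarycentricCoordinates

section LatticeDecomposition

variable {n k : ℕ} {r : ℕ → ℕ} {f g : Finset (Fin (n + 1))} {α : Fin (n + 1) → ℕ}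

/-- The pairs `(ℓ, f)` indexing the decomposition: `f` is the vertex set of an `ℓ`-dimensional
subsimplex. -/
abbrev Subsimplex (n : ℕ) : Type :=
  {q : ℕ × Finset (Fin (n + 1)) // q.1 ≤ n ∧ q.2.card = q.1 + 1}

lemma latticeTube_univ (s : ℕ) : latticeTube n k Finset.univ s = {α | ∑ i, α i = k} := by
  simp [latticeTube]

lemma mem_latticeTube_inter {s t : ℕ} (hf : α ∈ latticeTube n k f s)
    (hg : α ∈ latticeTube n k g t) : α ∈ latticeTube n k (f ∩ g) (s + t) := by
  refine ⟨hf.1, ?_⟩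
  rw [Finset.compl_inter]
  calc ∑ i ∈ fᶜ ∪ gᶜ, α i ≤ ∑ i ∈ fᶜ, α i + ∑ i ∈ gᶜ, α i := by
        rw [← Finset.sum_union_inter]
        exact Nat.le_add_right _ _
    _ ≤ s + t := Nat.add_le_add hf.2 hg.2

lemma mem_latticeS {l : ℕ} :
    α ∈ latticeS n k r l f ↔ α ∈ latticeTube n k f (r l) ∧
      ∀ i < l, ∀ e ⊆ f, e.card = i + 1 → α ∉ latticeTube n k e (r i) := by
  simp only [latticeS, Set.mem_sdiff, Set.mem_iUnion, Set.mem_ofPred_eq, not_exists, and_imp]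

lemma latticeSTop_eq_latticeS_univ : latticeSTop n k r = latticeS n k r n Finset.univ := by
  simp [latticeSTop, latticeS, latticeTube_univ]

lemma ite_latticeSTop_eq_latticeS (q : Subsimplex n) :
    (if q.1.1 = n then latticeSTop n k r else latticeS n k r q.1.1 q.1.2) =
      latticeS n k r q.1.1 q.1.2 := by
  split_ifs with hq
  · have huniv : q.1.2 = Finset.univ := by
      rw [← Finset.card_eq_iff_eq_univ, q.2.2, hq, Fintype.card_fin]
    rw [huniv, hq, latticeSTop_eq_latticeS_univ]
  · rfl

lemma two_mul_radius_le (hr : ∀ l, l + 1 < n → 2 * r (l + 1) ≤ r l) {i j : ℕ} (hij : i < j)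
    (hj : j < n) : 2 * r j ≤ r i := by
  induction j, hij using Nat.le_induction with
  | base => exact hr i hj
  | succ j _ ih =>
    have hstep := hr j hj
    have hprev := ih (by omega)
    omega

lemma inter_nonempty_of_mem_latticeTube (hr : ∀ l, l + 1 < n → 2 * r (l + 1) ≤ r l)
    (hk : 2 * r 0 < k) {l l' : ℕ} (hl : l < n) (hl' : l' < n)
    (hf : α ∈ latticeTube n k f (r l)) (hg : α ∈ latticeTube n k g (r l')) :
    (f ∩ g).Nonempty := by
  have radius_le_zero {j : ℕ} (hj : j < n) : r j ≤ r 0 := by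
    obtain rfl | hpos := Nat.eq_zero_or_pos j
    · exact le_rfl
    · exact (Nat.le_mul_of_pos_left _ two_pos).trans (two_mul_radius_le hr hpos hj)
  rw [Finset.nonempty_iff_ne_empty]
  intro hempty
  have hle := (mem_latticeTube_inter hf hg).2
  rw [hempty, Finset.compl_empty, hf.1] at hle
  have hrl := radius_le_zero hl
  have hrl' := radius_le_zero hl'
  omega

lemma subset_of_mem_latticeS (hr : ∀ l, l + 1 < n → 2 * r (l + 1) ≤ r l) (hk : 2 * r 0 < k)
    {l l' : ℕ} (hll : l ≤ l') (hl' : l' < n) (hf : f.card = l + 1)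
    (hαf : α ∈ latticeS n k r l f) (hαg : α ∈ latticeTube n k g (r l')) : f ⊆ g := by
  by_contra hfg
  rw [mem_latticeS] at hαf
  obtain ⟨d, hd⟩ : ∃ d, (f ∩ g).card = d + 1 :=
    Nat.exists_eq_add_one.mpr
      (inter_nonempty_of_mem_latticeTube hr hk (hll.trans_lt hl') hl' hαf.1 hαg).card_pos
  have hdl : d < l := by
    have hlt : (f ∩ g).card < f.card := Finset.card_lt_card
      ⟨Finset.inter_subset_left, fun h => hfg (h.trans Finset.inter_subset_right)⟩
    omega
  have hradius : r l + r l' ≤ r d := by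
    have hrl := two_mul_radius_le hr hdl (hll.trans_lt hl')
    have hrl' := two_mul_radius_le hr (hdl.trans_le hll) hl'
    omega
  have hinter := mem_latticeTube_inter hαf.1 hαg
  exact hαf.2 d hdl _ Finset.inter_subset_left hd ⟨hinter.1, hinter.2.trans hradius⟩

lemma subsimplex_eq_of_mem_latticeS (hr : ∀ l, l + 1 < n → 2 * r (l + 1) ≤ r l)
    (hk : 2 * r 0 < k) {p q : Subsimplex n} (hp : α ∈ latticeS n k r p.1.1 p.1.2)
    (hq : α ∈ latticeS n k r q.1.1 q.1.2) : p = q := by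
  wlog hle : p.1.1 ≤ q.1.1 generalizing p q
  · exact (this hq hp (by omega)).symm
  have hface : p.1.2 ⊆ q.1.2 := by
    obtain hlt | htop := q.2.1.lt_or_eq
    · exact subset_of_mem_latticeS hr hk hle hlt p.2.2 hp (mem_latticeS.mp hq).1
    · rw [(Finset.card_eq_iff_eq_univ q.1.2).mp (by rw [q.2.2, htop, Fintype.card_fin])]
      exact Finset.subset_univ _
  have hdim : p.1.1 = q.1.1 := hle.eq_of_not_lt fun hlt =>
    (mem_latticeS.mp hq).2 _ hlt _ hface p.2.2 (mem_latticeS.mp hp).1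
  have hvertices : p.1.2 = q.1.2 :=
    Finset.eq_of_subset_of_card_le hface (by rw [p.2.2, q.2.2, hdim])
  exact Subtype.ext (Prod.ext hdim hvertices)

lemma pairwise_disjoint_latticeS (hr : ∀ l, l + 1 < n → 2 * r (l + 1) ≤ r l) (hk : 2 * r 0 < k) :
    Pairwise (Function.onFun Disjoint fun q : Subsimplex n => latticeS n k r q.1.1 q.1.2) :=
  fun _ _ hpq => Set.disjoint_left.mpr fun _ hp hq =>
    hpq (subsimplex_eq_of_mem_latticeS hr hk hp hq)

lemma iUnion_latticeS :
    ⋃ q : Subsimplex n, latticeS n k r q.1.1 q.1.2 = {α | ∑ i, α i = k} := by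
  classical
  refine Set.Subset.antisymm (Set.iUnion_subset fun q α hα => hα.1.1) fun α hα => ?_
  have hex : ∃ i, ∃ e : Finset (Fin (n + 1)), e.card = i + 1 ∧ α ∈ latticeTube n k e (r i) :=
    ⟨n, Finset.univ, by simp, by rwa [latticeTube_univ]⟩
  obtain ⟨e, he, hαe⟩ := Nat.find_spec hex
  have hdim : Nat.find hex ≤ n := by
    have hcard := Finset.card_le_univ e
    rw [Fintype.card_fin] at hcard
    omega
  exact Set.mem_iUnion.mpr ⟨⟨(Nat.find hex, e), hdim, he⟩, mem_latticeS.mpr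
    ⟨hαe, fun i hi e' _ he' hαe' => Nat.find_min hex hi ⟨e', he', hαe'⟩⟩⟩

end LatticeDecomposition

lemma iSupIndep_span_image {ι κ R M : Type*} [Ring R] [AddCommGroup M] [Module R M]
    {b : ι → M} {S : κ → Set ι} (hb : LinearIndepOn R b (⋃ q, S q))
    (hS : Pairwise (Function.onFun Disjoint S)) :
    iSupIndep fun q => Submodule.span R (b '' S q) := by
  intro q
  simp only [← Submodule.span_iUnion, ← Set.image_iUnion]
  have hdisjoint : Disjoint (S q) (⋃ p, ⋃ (_ : p ≠ q), S p) :=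
    Set.disjoint_iUnion₂_right.mpr fun p hp => hS hp.symm
  have hsubset : S q ∪ ⋃ p, ⋃ (_ : p ≠ q), S p ⊆ ⋃ q, S q :=
    Set.union_subset (Set.subset_iUnion S q) (Set.iUnion₂_subset fun p _ => Set.subset_iUnion S p)
  exact ((linearIndepOn_union_iff hdisjoint).mp (hb.mono hsubset)).2.2

/-- geometric decomposition of `P_k`: the space of polynomial functions of
total degree at most `k` is the internal direct sum over `ℓ = 0,…,n` and sub-simplices
`f` (with `f = {0,…,n}` for `ℓ = n`) of the spans of the Bernstein monomials `λ^α`,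
`α ∈ S_ℓ(f)`; in particular the Bernstein monomials indexed by `𝕋ⁿ_k` are linearly
independent (hence form a basis of `P_k`). -/
theorem geometric_decomposition_of_Pk
    (n : ℕ) (hn : 2 ≤ n) (m : ℕ) (r : ℕ → ℕ)
    (hrn : r n = 0) (hrn1 : r (n - 1) = m)
    (hrdec : ∀ l, l ≤ n - 2 → 2 * r (l + 1) ≤ r l)
    (k : ℕ) (hk : 2 * r 0 + 1 ≤ k)
    (v : Fin (n + 1) → (Fin n → ℝ)) (hv : AffineIndependent ℝ v)
    (lam : Fin (n + 1) → ((Fin n → ℝ) →ᵃ[ℝ] ℝ))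
    (hlam : ∀ i j, lam i (v j) = if i = j then 1 else 0)
    (hsum : ∀ x : Fin n → ℝ, ∑ i, lam i x = 1)
    (W : {q : ℕ × Finset (Fin (n + 1)) // q.1 ≤ n ∧ q.2.card = q.1 + 1} →
      Submodule ℝ ((Fin n → ℝ) → ℝ))
    (hW : ∀ q, W q = Submodule.span ℝ
      (bernsteinBary lam ''
        (if q.1.1 = n then latticeSTop n k r else latticeS n k r q.1.1 q.1.2))) :
    iSupIndep W ∧
    ((⨆ q, W q : Submodule ℝ ((Fin n → ℝ) → ℝ)) : Set ((Fin n → ℝ) → ℝ))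
      = {p | ∃ q : MvPolynomial (Fin n) ℝ, q.totalDegree ≤ k ∧
          p = fun x => MvPolynomial.eval x q} ∧
    LinearIndependent ℝ
      (fun a : {α : Fin (n + 1) → ℕ // ∑ i, α i = k} => bernsteinBary lam a.1) := by
  obtain ⟨b, rfl⟩ := exists_affineBasis_coord_eq (by simp) hv hlam
  obtain rfl : W = fun q : Subsimplex n =>
      Submodule.span ℝ (bernsteinBary b.coord '' latticeS n k r q.1.1 q.1.2) :=
    funext fun q => by rw [hW, ite_latticeSTop_eq_latticeS]
  have hindep : LinearIndepOn ℝ (bernsteinBary b.coord) {α | ∑ i, α i = k} := by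
    rw [bernsteinBary_eq_prod]
    exact linearIndependent_prod_coord_pow b k
  refine ⟨iSupIndep_span_image ?_ ?_, ?_, hindep⟩
  · rwa [iUnion_latticeS]
  · exact pairwise_disjoint_latticeS (fun l hl => hrdec l (by omega)) hk
  · rw [← Submodule.span_iUnion, ← Set.image_iUnion, iUnion_latticeS, bernsteinBary_eq_prod,
      span_prod_coord_pow]
    exact Set.ext fun p => mem_polynomialFunctionsLE
end
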